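/- Let E₀ > 0, δ > 0, k > −1, m > −1 with k + m + 1 > 0, and let φ : (0,∞) → [0,∞) be measurable with φ(E) = 0 for E ≥ E₀ and φ(E) = E(E₀² − E²)₊^k + E · O((E₀² − E²)₊^{k+δ}) as E → E₀−. Then h_m(u) = ∫_u^{E₀} φ(E)(E² − u²)^m dE satisfies h_m(u) = ½ c_{k,m} (E₀² − u²)^{k+m+1} + O((E₀² − u²)^{k+m+δ+1}) as u → E₀− with 0 < u < E₀, where c_{k,m} = ∫₀¹ s^k (1−s)^m ds. -/

import Mathlib

open MeasureTheory Real Set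

/-!
With `t = E ^ 2`, the functional `φ ↦ ∫ E in u..E₀, φ E * (E ^ 2 - u ^ 2) ^ m` sends the profile
`E * (E₀ ^ 2 - E ^ 2) ^ k` to half of the Beta integral of `(E₀ ^ 2 - t) ^ k * (t - u ^ 2) ^ m` over
`(u ^ 2, E₀ ^ 2)`, which scales exactly like `(E₀ ^ 2 - u ^ 2) ^ (k + m + 1)`. The functional is
linear and monotone, so the error in `φ`, bounded by the profile with exponent `k + δ`, contributes
at most the same expression with `k + δ` in place of `k`.
-/

/-- The constant `c_{k,m}`: the Beta integral with exponents `k` and `m`, that is, Euler's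
`B(k + 1, m + 1)`. It is `0` by convention when the integral diverges. -/
noncomputable def betaConst (k m : ℝ) : ℝ :=
  ∫ s in (0 : ℝ)..1, s ^ k * (1 - s) ^ m

/-- The relativistic density functional `h_m` of the energy profile `φ` with cut-off energy `E₀`. -/
noncomputable def relDensity (m E₀ : ℝ) (φ : ℝ → ℝ) (u : ℝ) : ℝ :=
  ∫ E in u..E₀, φ E * (E ^ 2 - u ^ 2) ^ m

section BetaIntegral

variable {k m : ℝ}

theorem intervalIntegrable_rpow_mul_one_sub_rpow (hk : -1 < k) (hm : -1 < m) :
    IntervalIntegrable (fun s : ℝ => s ^ k * (1 - s) ^ m) volume 0 1 := by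
  have hbeta := Complex.betaIntegral_convergent (u := ((k + 1 : ℝ) : ℂ)) (v := ((m + 1 : ℝ) : ℂ))
    (by rw [Complex.ofReal_re]; linarith) (by rw [Complex.ofReal_re]; linarith)
  refine hbeta.norm.congr_uIoo fun s hs => ?_
  rw [uIoo_of_le zero_le_one] at hs
  have hsub : (1 : ℂ) - s = ((1 - s : ℝ) : ℂ) := by push_cast; rfl
  simp only [norm_mul, hsub, Complex.norm_cpow_eq_rpow_re_of_pos hs.1,
    Complex.norm_cpow_eq_rpow_re_of_pos (sub_pos.2 hs.2), Complex.sub_re, Complex.ofReal_re,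
    Complex.one_re, add_sub_cancel_right]

theorem betaConst_pos (hk : -1 < k) (hm : -1 < m) : 0 < betaConst k m :=
  intervalIntegral.intervalIntegral_pos_of_pos_on (intervalIntegrable_rpow_mul_one_sub_rpow hk hm)
    (fun _ hs => mul_pos (rpow_pos_of_pos hs.1 k) (rpow_pos_of_pos (sub_pos.2 hs.2) m)) zero_lt_one

theorem integral_sub_rpow_mul_sub_rpow {a b : ℝ} (hab : a < b) (k m : ℝ) :
    ∫ t in a..b, (b - t) ^ k * (t - a) ^ m = betaConst k m * (b - a) ^ (k + m + 1) := by
  have hlen : 0 < b - a := sub_pos.2 hab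
  calc ∫ t in a..b, (b - t) ^ k * (t - a) ^ m
      = (b - a) * ∫ s in (0 : ℝ)..1,
          (b - (b - (b - a) * s)) ^ k * (b - (b - a) * s - a) ^ m := by
        simpa only [mul_zero, mul_one, sub_zero, sub_sub_cancel, smul_eq_mul] using
          (intervalIntegral.smul_integral_comp_sub_mul (a := 0) (b := 1)
            (fun t : ℝ => (b - t) ^ k * (t - a) ^ m) (b - a) b).symm
    _ = (b - a) * ∫ s in (0 : ℝ)..1, (b - a) ^ k * (b - a) ^ m * (s ^ k * (1 - s) ^ m) := by
        congr 1
        refine intervalIntegral.integral_congr_Ioo_of_le zero_le_one fun s hs => ?_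
        have hright : b - (b - a) * s - a = (b - a) * (1 - s) := by ring
        simp only [sub_sub_cancel, hright, mul_rpow hlen.le hs.1.le,
          mul_rpow hlen.le (sub_pos.2 hs.2).le]
        ring
    _ = betaConst k m * (b - a) ^ (k + m + 1) := by
        rw [intervalIntegral.integral_const_mul, rpow_add hlen, rpow_add hlen, rpow_one, betaConst]
        ring

end BetaIntegral

theorem integral_mul_comp_sq {u v : ℝ} (hu : 0 ≤ u) (hv : 0 ≤ v) (g : ℝ → ℝ) :
    ∫ x in u..v, x * g (x ^ 2) = 1 / 2 * ∫ t in u ^ 2..v ^ 2, g t := by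
  have hsubst := intervalIntegral.integral_comp_mul_deriv_of_deriv_nonneg (g := g)
    (f := fun x : ℝ => x ^ 2) (f' := fun x => 2 * x) (a := u) (b := v) (by fun_prop)
    (fun x _ => by simpa using hasDerivAt_pow 2 x)
    (fun x hx => mul_nonneg zero_le_two ((le_min hu hv).trans hx.1.le))
  rw [← hsubst, ← intervalIntegral.integral_const_mul]
  congr with x
  simp only [Function.comp_apply]
  ring

theorem norm_integral_sub_integral_le_of_norm_sub_le {α F : Type*} [MeasurableSpace α]
    [NormedAddCommGroup F] [NormedSpace ℝ F] {μ : Measure α} {f g : α → F} {h : α → ℝ}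
    (hf : AEStronglyMeasurable f μ) (hg : Integrable g μ) (hh : Integrable h μ)
    (hle : ∀ᵐ x ∂μ, ‖f x - g x‖ ≤ h x) :
    ‖∫ x, f x ∂μ - ∫ x, g x ∂μ‖ ≤ ∫ x, h x ∂μ := by
  have hsub : Integrable (fun x => f x - g x) μ :=
    hh.mono' (hf.sub hg.aestronglyMeasurable) hle
  have hf_int : Integrable f μ :=
    (hsub.add hg).congr (.of_forall fun x => sub_add_cancel (f x) (g x))
  rw [← integral_sub hf_int hg]
  exact norm_integral_le_of_norm_le hh hle

section RelDensity

variable {u E₀ k m δ C : ℝ} {φ ψ χ : ℝ → ℝ}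

theorem relDensity_const_mul (m E₀ c : ℝ) (φ : ℝ → ℝ) (u : ℝ) :
    relDensity m E₀ (fun E => c * φ E) u = c * relDensity m E₀ φ u := by
  simp only [relDensity, mul_assoc, intervalIntegral.integral_const_mul]

theorem abs_relDensity_sub_le (hu : 0 ≤ u) (huE₀ : u ≤ E₀)
    (hφ : AEStronglyMeasurable φ (volume.restrict (Ioo u E₀)))
    (hψ : IntervalIntegrable (fun E => ψ E * (E ^ 2 - u ^ 2) ^ m) volume u E₀)
    (hχ : IntervalIntegrable (fun E => χ E * (E ^ 2 - u ^ 2) ^ m) volume u E₀)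
    (hle : ∀ E ∈ Ioo u E₀, |φ E - ψ E| ≤ χ E) :
    |relDensity m E₀ φ u - relDensity m E₀ ψ u| ≤ relDensity m E₀ χ u := by
  rw [intervalIntegrable_iff_integrableOn_Ioo_of_le huE₀] at hψ hχ
  simp only [relDensity, intervalIntegral.integral_of_le huE₀, integral_Ioc_eq_integral_Ioo]
  refine norm_integral_sub_integral_le_of_norm_sub_le
    (hφ.mul (Measurable.aestronglyMeasurable (by fun_prop))) hψ hχ
    (ae_restrict_of_forall_mem measurableSet_Ioo fun E hE => ?_)
  have hweight : 0 ≤ (E ^ 2 - u ^ 2) ^ m :=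
    rpow_nonneg (sub_nonneg.2 (pow_le_pow_left₀ hu hE.1.le 2)) m
  rw [Pi.mul_apply, ← sub_mul, norm_mul, norm_of_nonneg hweight]
  exact mul_le_mul_of_nonneg_right (hle E hE) hweight

theorem relDensity_mul_rpow (hu : 0 ≤ u) (huE₀ : u < E₀) (k m : ℝ) :
    relDensity m E₀ (fun E => E * (E₀ ^ 2 - E ^ 2) ^ k) u =
      1 / 2 * betaConst k m * (E₀ ^ 2 - u ^ 2) ^ (k + m + 1) := by
  have hsq : u ^ 2 < E₀ ^ 2 := by gcongr
  simp only [relDensity, mul_assoc]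
  rw [integral_mul_comp_sq hu (hu.trans huE₀.le) (fun t => (E₀ ^ 2 - t) ^ k * (t - u ^ 2) ^ m),
    integral_sub_rpow_mul_sub_rpow hsq]

-- A function that is not integrable has integral `0` by convention, so the positive value found in
-- `relDensity_mul_rpow` already forces integrability.
theorem intervalIntegrable_mul_rpow_mul_rpow (hk : -1 < k) (hm : -1 < m) (hu : 0 ≤ u)
    (huE₀ : u < E₀) :
    IntervalIntegrable (fun E => E * (E₀ ^ 2 - E ^ 2) ^ k * (E ^ 2 - u ^ 2) ^ m) volume u E₀ := by
  have hsq : 0 < E₀ ^ 2 - u ^ 2 := sub_pos.2 (by gcongr)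
  have hpos : 0 < relDensity m E₀ (fun E => E * (E₀ ^ 2 - E ^ 2) ^ k) u := by
    rw [relDensity_mul_rpow hu huE₀]
    have hbeta := betaConst_pos hk hm
    positivity
  exact intervalIntegral.intervalIntegrable_of_integral_ne_zero hpos.ne'

theorem abs_relDensity_sub_le_mul_rpow (hk : -1 < k) (hkδ : -1 < k + δ) (hm : -1 < m)
    (hu : 0 ≤ u) (huE₀ : u < E₀) (hφ : AEStronglyMeasurable φ (volume.restrict (Ioo u E₀)))
    (hle : ∀ E ∈ Ioo u E₀,
      |φ E - E * (E₀ ^ 2 - E ^ 2) ^ k| ≤ C * (E * (E₀ ^ 2 - E ^ 2) ^ (k + δ))) :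
    |relDensity m E₀ φ u - 1 / 2 * betaConst k m * (E₀ ^ 2 - u ^ 2) ^ (k + m + 1)| ≤
      C * (1 / 2 * betaConst (k + δ) m) * (E₀ ^ 2 - u ^ 2) ^ (k + m + δ + 1) := by
  have hψ := intervalIntegrable_mul_rpow_mul_rpow hk hm hu huE₀
  have hχ := (intervalIntegrable_mul_rpow_mul_rpow hkδ hm hu huE₀).const_mul C
  calc |relDensity m E₀ φ u - 1 / 2 * betaConst k m * (E₀ ^ 2 - u ^ 2) ^ (k + m + 1)|
      = |relDensity m E₀ φ u - relDensity m E₀ (fun E => E * (E₀ ^ 2 - E ^ 2) ^ k) u| := by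
        rw [relDensity_mul_rpow hu huE₀]
    _ ≤ relDensity m E₀ (fun E => C * (E * (E₀ ^ 2 - E ^ 2) ^ (k + δ))) u :=
        abs_relDensity_sub_le hu huE₀.le hφ hψ (by simpa only [mul_assoc] using hχ) hle
    _ = C * (1 / 2 * betaConst (k + δ) m) * (E₀ ^ 2 - u ^ 2) ^ (k + m + δ + 1) := by
        rw [relDensity_const_mul, relDensity_mul_rpow hu huE₀, add_right_comm k δ m, mul_assoc C]

end RelDensity

-- The expansion is required only below `E₀`: above it, the truncated difference raised to the power
-- `k = 0` is `0 ^ 0 = 1` in Lean, not the vanishing profile that is meant.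
theorem hm_asymptotics_general {E₀ δ k m : ℝ} (hk : -1 < k) (hkδ : -1 < k + δ) (hm : -1 < m)
    {φ : ℝ → ℝ} (hφ : AEStronglyMeasurable φ (volume.restrict (Ioo 0 E₀)))
    (hasymp : ∃ C ε : ℝ, 0 < ε ∧ ∀ E, 0 < E → E₀ - ε < E → E < E₀ →
      |φ E - E * (E₀ ^ 2 - E ^ 2) ^ k| ≤ C * E * (E₀ ^ 2 - E ^ 2) ^ (k + δ)) :
    ∃ C ε : ℝ, 0 < ε ∧ ∀ u, 0 < u → E₀ - ε < u → u < E₀ →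
      |relDensity m E₀ φ u - 1 / 2 * betaConst k m * (E₀ ^ 2 - u ^ 2) ^ (k + m + 1)| ≤
        C * (E₀ ^ 2 - u ^ 2) ^ (k + m + δ + 1) := by
  obtain ⟨C, ε, hε, hC⟩ := hasymp
  refine ⟨C * (1 / 2 * betaConst (k + δ) m), ε, hε, fun u hu hεu huE₀ => ?_⟩
  refine abs_relDensity_sub_le_mul_rpow hk hkδ hm hu.le huE₀
    (hφ.mono_set (Ioo_subset_Ioo_left hu.le)) fun E hE => ?_
  rw [← mul_assoc]
  exact hC E (hu.trans hE.1) (hεu.trans hE.1) hE.2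

theorem hm_asymptotics
    (E₀ δ k m : ℝ) (hE₀ : 0 < E₀) (hδ : 0 < δ) (hk : -1 < k) (hm : -1 < m)
    (hkm : 0 < k + m + 1)
    (φ : ℝ → ℝ) (hmeas : Measurable φ)
    (hnonneg : ∀ E, 0 < E → 0 ≤ φ E)
    (hvanish : ∀ E, E₀ ≤ E → φ E = 0)
    (hasymp : ∃ C ε : ℝ, 0 < ε ∧ ∀ E, 0 < E → E₀ - ε < E →
      |φ E - E * (max (E₀ ^ 2 - E ^ 2) 0) ^ k| ≤
        C * E * (max (E₀ ^ 2 - E ^ 2) 0) ^ (k + δ)) :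
    ∃ C ε : ℝ, 0 < ε ∧ ∀ u, 0 < u → E₀ - ε < u → u < E₀ →
      |(∫ E in u..E₀, φ E * (E ^ 2 - u ^ 2) ^ m) -
          1 / 2 * (∫ s in (0:ℝ)..1, s ^ k * (1 - s) ^ m) *
            (E₀ ^ 2 - u ^ 2) ^ (k + m + 1)| ≤
        C * (E₀ ^ 2 - u ^ 2) ^ (k + m + δ + 1) := by
  obtain ⟨C, ε, hε, hC⟩ := hasymp
  refine hm_asymptotics_general hk (by linarith) hm hmeas.aestronglyMeasurable
    ⟨C, ε, hε, fun E hE hεE hEE₀ => ?_⟩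
  simpa only [max_eq_left (sub_nonneg.2 (pow_le_pow_left₀ hE.le hEE₀.le 2))] using hC E hE hεE
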